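/- arXiv:math/0512520 — 4 statements merged into one kernel-verified Lean document; each statement's English description precedes it below -/
import Mathlib

section
/- Let z ∈ k[X] satisfy d(z) = 0 and e(z) = w·z for some scalar w ∈ k. Then for every natural number i ≥ 1, d(d̂^i(z)) = i·(w − i + 1)·d̂^{i−1}(z). -/
open MvPolynomial Finset

/-- The Weitzenböck derivation `d` on `k[x_0,…,x_n]`: `d(x_i) = x_{i-1}` for
`1 ≤ i ≤ n` and `d(x_0) = 0`. -/
noncomputable def weitz (k : Type*) [Field k] [CharZero k] (n : ℕ) :
    Derivation k (MvPolynomial (Fin (n + 1)) k) (MvPolynomial (Fin (n + 1)) k) :=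
  mkDerivation k (fun i : Fin (n + 1) =>
    if _ : (i : ℕ) = 0 then 0
    else X (⟨(i : ℕ) - 1, by have := i.isLt; omega⟩ : Fin (n + 1)))

/-- The derivation `d̂` on `k[x_0,…,x_n]`: `d̂(x_i) = (i+1)(n−i)·x_{i+1}` for
`0 ≤ i ≤ n−1` and `d̂(x_n) = 0`. -/
noncomputable def dhat (k : Type*) [Field k] [CharZero k] (n : ℕ) :
    Derivation k (MvPolynomial (Fin (n + 1)) k) (MvPolynomial (Fin (n + 1)) k) :=
  mkDerivation k (fun i : Fin (n + 1) =>
    if h : (i : ℕ) = n then 0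
    else ((((i : ℕ) + 1) * (n - (i : ℕ)) : ℕ) : k) •
      X (⟨(i : ℕ) + 1, by have := i.isLt; omega⟩ : Fin (n + 1)))

/-- The derivation `e` on `k[x_0,…,x_n]`: `e(x_i) = (n−2i)·x_i`. -/
noncomputable def ee (k : Type*) [Field k] [CharZero k] (n : ℕ) :
    Derivation k (MvPolynomial (Fin (n + 1)) k) (MvPolynomial (Fin (n + 1)) k) :=
  mkDerivation k (fun i : Fin (n + 1) => ((n : ℤ) - 2 * (i : ℕ)) • X i)

/-! For `n ≠ 0` the derivations `(e, d, d̂)` form an `sl₂` triple acting on `k[x_0,…,x_n]`, with `d`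
as raising and `d̂` as lowering operator. A nonzero `z` killed by `d` with `e(z) = w·z` is then a
primitive vector of weight `w`, and the asserted formula is the action of the raising operator on
the string `z, d̂(z), d̂²(z), …`. For `n = 0` all three derivations vanish, which
Mathlib's `IsSl2Triple` excludes, and the eigenvalue equation forces `w·z = 0`. -/

theorem derivation_toEnd_pow_apply {R A : Type*} [CommRing R] [CommRing A] [Algebra R A]
    (D : Derivation R A A) (j : ℕ) (a : A) :
    (LieModule.toEnd R (Derivation R A A) A D ^ j) a = D^[j] a :=
  Module.End.pow_apply _ j a

section

variable (k : Type*) [Field k] [CharZero k] (n : ℕ)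

theorem weitz_X_zero : weitz k n (X 0) = 0 := by
  simp [weitz, mkDerivation_X]

theorem dhat_X_last : dhat k n (X (Fin.last n)) = 0 := by
  simp [dhat, mkDerivation_X]

variable {n}

theorem weitz_X_succ (i : Fin n) : weitz k n (X i.succ) = X i.castSucc := by
  simp only [weitz, mkDerivation_X, Fin.val_succ, Nat.succ_ne_zero, dite_false]
  rfl

theorem dhat_X_castSucc (i : Fin n) :
    dhat k n (X i.castSucc) = (((i : k) + 1) * (n - i)) • X i.succ := by
  simp [dhat, mkDerivation_X, i.isLt.ne, Nat.cast_sub i.isLt.le, Fin.succ]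

theorem ee_X (i : Fin (n + 1)) : ee k n (X i) = ((n : k) - 2 * i) • X i := by
  rw [ee, mkDerivation_X, ← Int.cast_smul_eq_zsmul k]
  push_cast
  rfl

theorem weitz_dhat_X (i : Fin (n + 1)) :
    weitz k n (dhat k n (X i)) = (((i : k) + 1) * (n - i)) • X i := by
  cases i using Fin.lastCases with
  | last => simp [dhat_X_last]
  | cast i => simp [dhat_X_castSucc, weitz_X_succ]

theorem dhat_weitz_X (i : Fin (n + 1)) :
    dhat k n (weitz k n (X i)) = ((i : k) * (n - i + 1)) • X i := by
  cases i using Fin.cases with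
  | zero => simp [weitz_X_zero]
  | succ i =>
    rw [weitz_X_succ, dhat_X_castSucc, Fin.val_succ]
    push_cast
    module

theorem weitz_zero : weitz k 0 = 0 := by
  ext1 i
  rw [Fin.eq_zero i]
  exact weitz_X_zero k 0

theorem dhat_zero : dhat k 0 = 0 := by
  ext1 i
  rw [Fin.eq_zero i]
  exact dhat_X_last k 0

theorem ee_zero : ee k 0 = 0 := by
  ext1 i
  simp [ee_X, Fin.eq_zero i]

variable (n)

theorem lie_weitz_dhat : ⁅weitz k n, dhat k n⁆ = ee k n := by
  ext1 i
  rw [Derivation.commutator_apply, weitz_dhat_X, dhat_weitz_X, ee_X]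
  module

theorem lie_ee_weitz : ⁅ee k n, weitz k n⁆ = 2 • weitz k n := by
  ext1 i
  rw [Derivation.commutator_apply, Derivation.smul_apply, ee_X, Derivation.map_smul]
  cases i using Fin.cases with
  | zero => simp [weitz_X_zero]
  | succ i =>
    rw [weitz_X_succ, ee_X, Fin.val_succ, Fin.val_castSucc]
    push_cast
    module

theorem lie_ee_dhat : ⁅ee k n, dhat k n⁆ = -(2 • dhat k n) := by
  ext1 i
  rw [Derivation.commutator_apply, Derivation.neg_apply, Derivation.smul_apply, ee_X,
    Derivation.map_smul]
  cases i using Fin.lastCases with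
  | last => simp [dhat_X_last]
  | cast i =>
    rw [dhat_X_castSucc, Derivation.map_smul, ee_X, Fin.val_succ, Fin.val_castSucc]
    push_cast
    module

variable {n}

theorem ee_ne_zero (hn : n ≠ 0) : ee k n ≠ 0 := by
  intro h
  have hX : ee k n (X 0) = 0 := by rw [h, Derivation.zero_apply]
  simp [ee_X, hn] at hX

theorem isSl2Triple_ee_weitz_dhat (hn : n ≠ 0) :
    IsSl2Triple (ee k n) (weitz k n) (dhat k n) where
  h_ne_zero := ee_ne_zero k hn
  lie_e_f := lie_weitz_dhat k n
  lie_h_e_nsmul := lie_ee_weitz k n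
  lie_h_f_nsmul := lie_ee_dhat k n

variable {k} in
theorem weitz_iterate_succ_dhat {z : MvPolynomial (Fin (n + 1)) k} {w : k}
    (hd : weitz k n z = 0) (he : ee k n z = w • z) (j : ℕ) :
    weitz k n ((dhat k n)^[j + 1] z) = (((j : k) + 1) * (w - j)) • (dhat k n)^[j] z := by
  rcases eq_or_ne z 0 with rfl | hz
  · simp [iterate_map_zero]
  rcases eq_or_ne n 0 with rfl | hn
  · obtain rfl : w = 0 := by simpa [ee_zero, hz] using he.symm
    cases j <;> simp [weitz_zero, dhat_zero, Function.iterate_succ_apply']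
  have hprim : (isSl2Triple_ee_weitz_dhat k hn).HasPrimitiveVectorWith z w := ⟨hz, he, hd⟩
  simpa only [derivation_toEnd_pow_apply, Derivation.bracket_eq_fun] using
    hprim.lie_e_pow_succ_toEnd_f j

end

/-- If `d(z) = 0` and `e(z) = w·z`, then
`d(d̂^i(z)) = i·(w − i + 1)·d̂^{i−1}(z)` for every `i ≥ 1`. -/
theorem weitz_iterate_dhat (k : Type*) [Field k] [CharZero k] (n : ℕ)
    (z : MvPolynomial (Fin (n + 1)) k) (w : k)
    (hd : weitz k n z = 0) (he : ee k n z = w • z) (i : ℕ) (hi : 1 ≤ i) :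
    weitz k n ((⇑(dhat k n))^[i] z) =
      ((i : k) * (w - (i : k) + 1)) • (⇑(dhat k n))^[i - 1] z := by
  obtain ⟨j, rfl⟩ := Nat.exists_eq_add_of_le' hi
  rw [weitz_iterate_succ_dhat hd he j, Nat.add_sub_cancel]
  push_cast
  module
end

section
/- For n = 2 (the polynomial ring k[x_0, x_1, x_2] with Weitzenböck derivation d(x_2) = x_1, d(x_1) = x_0, d(x_0) = 0), the kernel of d equals the k-subalgebra generated by the two polynomials t = x_0 and dv = x_1^2 − 2·x_0·x_2: k[x_0,x_1,x_2]^d = k[t, dv]. -/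
open MvPolynomial Finset

/-!
Over `k[t, dv]` the variable `x_1` is a local slice: `d x_1 = x_0 = t`, and
`2 x_0 x_2 = x_1² - dv`, so every `f` becomes a polynomial in `x_1` with coefficients in
`k[t, dv]` once multiplied by a power of `2 x_0`. On such polynomials `d` acts as `t ∂/∂x_1`, so
those killed by `d` have degree `0` in `x_1`, that is, `(2 x_0)^N f ∈ k[t, dv]` if `d f = 0`.

The factor `(2 x_0)^N` can be cancelled inside `k[t, dv]`: setting `x_2 = 0` sends `dv` to `x_1²`,
hence following it by the projection onto even powers of `x_1` gives a `k[t, dv]`-linear retraction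
of `k[x_0, x_1, x_2]` onto `k[t, dv]`.
-/

open scoped Polynomial Polynomial.Bivariate nonZeroDivisors

section Torsion

instance instIsAddTorsionFreeMvPolynomial (σ R : Type*) [CommSemiring R] [IsAddTorsionFree R] :
    IsAddTorsionFree (MvPolynomial σ R) :=
  Module.isTorsionFree_nat_iff_isAddTorsionFree.1 AddMonoidAlgebra.instIsTorsionFree

theorem natCast_mem_nonZeroDivisors (R : Type*) [CommSemiring R] [IsAddTorsionFree R] {n : ℕ}
    (hn : n ≠ 0) : (n : R) ∈ R⁰ :=
  mem_nonZeroDivisors_iff_right.2 fun a ha => by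
    rwa [← nsmul_eq_mul', smul_eq_zero_iff_right hn] at ha

theorem two_mul_X_mem_nonZeroDivisors {σ R : Type*} [CommSemiring R] [IsAddTorsionFree R]
    (i : σ) : 2 * X i ∈ (MvPolynomial σ R)⁰ :=
  mul_mem (mod_cast natCast_mem_nonZeroDivisors _ two_ne_zero) isRegular_X.mem_nonZeroDivisors

end Torsion

section Slice

variable {R A : Type*} [CommRing R] [CommRing A] [Algebra R A]

/-- A derivation that vanishes on a subalgebra `T`, regarded as a `T`-linear derivation. -/
def derivationOver (D : Derivation R A A) (T : Subalgebra R A) (hT : ∀ a ∈ T, D a = 0) :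
    Derivation T A A :=
  .mk'
    { toFun := D
      map_add' := map_add D
      map_smul' := fun a b => by simp [Subalgebra.smul_def, hT a a.2] }
    D.leibniz

theorem eq_C_of_derivation_aeval_eq_zero [IsAddTorsionFree R] [FaithfulSMul R A]
    (D : Derivation R A A) {s : A} (hs : D s ∈ A⁰) (p : R[X])
    (hp : D (Polynomial.aeval s p) = 0) : p = Polynomial.C (p.coeff 0) := by
  induction hn : p.natDegree using Nat.strong_induction_on generalizing p with
  | _ n ih =>
    by_cases hn0 : p.natDegree = 0
    · exact Polynomial.eq_C_of_natDegree_eq_zero hn0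
    have hroot : Polynomial.aeval s p.derivative = 0 := by
      rw [D.map_aeval, smul_eq_mul] at hp
      exact hs.2 _ hp
    have hconst : p.derivative = Polynomial.C (p.derivative.coeff 0) :=
      ih _ (hn ▸ Polynomial.natDegree_derivative_lt hn0) _ (by rw [hroot, map_zero]) rfl
    have hzero : p.derivative = 0 := by
      rw [hconst, Polynomial.aeval_C, FaithfulSMul.algebraMap_eq_zero_iff] at hroot
      rw [hconst, hroot, map_zero]
    exact Polynomial.eq_C_of_derivative_eq_zero hzero

theorem mem_of_mem_adjoin_of_derivation_eq_zero [IsAddTorsionFree A] (D : Derivation R A A)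
    {T : Subalgebra R A} (hT : ∀ a ∈ T, D a = 0) {s : A} (hs : D s ∈ A⁰) {a : A}
    (ha : a ∈ Algebra.adjoin T {s}) (hDa : D a = 0) : a ∈ T := by
  have : IsAddTorsionFree T := Subtype.val_injective.isAddTorsionFree T.val.toAddMonoidHom
  rw [Algebra.adjoin_singleton_eq_range_aeval] at ha
  obtain ⟨p, rfl⟩ := ha
  have hp : p = Polynomial.C (p.coeff 0) :=
    eq_C_of_derivation_aeval_eq_zero (derivationOver D T hT) hs p hDa
  rw [hp]
  simp

end Slice

theorem range_aevalAeval {R A : Type*} [CommSemiring R] [CommSemiring A] [Algebra R A] (x y : A) :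
    (Polynomial.aevalAeval x y : R[X][Y] →ₐ[R] A).range = Algebra.adjoin R {x, y} := by
  let e : R[X][Y] ≃ₐ[R] MvPolynomial (Fin 2) R := Polynomial.Bivariate.equivMvPolynomial R
  have hcomp : Polynomial.aevalAeval x y = (aeval ![x, y]).comp e.toAlgHom :=
    (Polynomial.aevalAevalEquiv R A).symm.injective (by simp [e])
  have hrange : e.toAlgHom.range = ⊤ := (AlgHom.range_eq_top _).2 e.surjective
  rw [hcomp, AlgHom.range_comp, hrange, Algebra.map_top, ← Algebra.adjoin_range_eq_range_aeval,
    Matrix.range_cons_cons_empty]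

section Weitzenbock

variable (R : Type*) [CommRing R]

/-- The Weitzenböck derivation `weitz` over an arbitrary commutative ring of coefficients. -/
noncomputable def weitzenbock (n : ℕ) :
    Derivation R (MvPolynomial (Fin (n + 1)) R) (MvPolynomial (Fin (n + 1)) R) :=
  mkDerivation R (Fin.cons 0 fun i : Fin n => X i.castSucc)

theorem weitz_eq_weitzenbock (k : Type*) [Field k] [CharZero k] (n : ℕ) :
    weitz k n = weitzenbock k n := by
  ext i
  cases i using Fin.cases with
  | zero => simp [weitz, weitzenbock]
  | succ i => simp [weitz, weitzenbock, Fin.castSucc, Fin.castAdd, Fin.castLE]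

/-- The invariant `dv`: a quarter of the discriminant of the binary quadratic form
`x_0 u² + 2 x_1 u v + 2 x_2 v²`. -/
noncomputable def disc : MvPolynomial (Fin 3) R := X 1 ^ 2 - 2 * X 0 * X 2

/-- The subalgebra `R[t, dv]` of `R[x_0, x_1, x_2]`. -/
noncomputable def discAlgebra : Subalgebra R (MvPolynomial (Fin 3) R) :=
  Algebra.adjoin R {X 0, disc R}

/-- The substitution `X ↦ t`, `Y ↦ dv`, which parametrizes `R[t, dv]`. -/
noncomputable def discParam : R[X][Y] →ₐ[R] MvPolynomial (Fin 3) R :=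
  Polynomial.aevalAeval (X 0) (disc R)

/-- Restriction of polynomials to the plane `x_2 = 0`, with `x_0` and `x_1` renamed to `X` and `Y`.
On this plane `dv` becomes a square. -/
noncomputable def restrictPlane : MvPolynomial (Fin 3) R →ₐ[R] R[X][Y] :=
  aeval ![Polynomial.C .X, .X, 0]

variable {R}

theorem weitzenbock_X_zero (n : ℕ) : weitzenbock R n (X 0) = 0 := by
  simp [weitzenbock]

theorem weitzenbock_X_succ {n : ℕ} (i : Fin n) :
    weitzenbock R n (X i.succ) = X i.castSucc := by
  simp [weitzenbock]

theorem weitzenbock_disc : weitzenbock R 2 (disc R) = 0 := by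
  have h1 : weitzenbock R 2 (X 1) = X 0 := weitzenbock_X_succ 0
  have h2 : weitzenbock R 2 (X 2) = X 1 := weitzenbock_X_succ 1
  have htwo : weitzenbock R 2 2 = 0 := (weitzenbock R 2).map_natCast 2
  simp only [disc, map_sub, Derivation.leibniz, Derivation.leibniz_pow, weitzenbock_X_zero, h1, h2,
    htwo, smul_eq_mul, nsmul_eq_mul]
  push_cast
  ring

theorem X_zero_mem_discAlgebra : X 0 ∈ discAlgebra R :=
  Algebra.subset_adjoin (Set.mem_insert _ _)

theorem disc_mem_discAlgebra : disc R ∈ discAlgebra R :=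
  Algebra.subset_adjoin (Set.mem_insert_of_mem _ rfl)

theorem weitzenbock_eq_zero_of_mem_discAlgebra {f : MvPolynomial (Fin 3) R}
    (hf : f ∈ discAlgebra R) : weitzenbock R 2 f = 0 := by
  have h : Set.EqOn (weitzenbock R 2) (0 : Derivation R _ _) {X 0, disc R} := by
    rintro _ (rfl | rfl)
    · exact weitzenbock_X_zero 2
    · exact weitzenbock_disc
  exact Derivation.eqOn_adjoin h hf

theorem exists_pow_mul_mem_of_discAlgebra_le {B : Subalgebra R (MvPolynomial (Fin 3) R)}
    (hB : discAlgebra R ≤ B) (hX1 : X 1 ∈ B) (f : MvPolynomial (Fin 3) R) :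
    ∃ N : ℕ, (2 * X 0) ^ N * f ∈ B := by
  have hX0 : X 0 ∈ B := hB X_zero_mem_discAlgebra
  have hX2 : 2 * X 0 * X 2 ∈ B := by
    have h : 2 * X 0 * X 2 = X 1 ^ 2 - disc R := by rw [disc]; ring
    exact h ▸ sub_mem (pow_mem hX1 2) (hB disc_mem_discAlgebra)
  have h2X0 : 2 * X 0 ∈ B := mul_mem (ofNat_mem B 2) hX0
  have hgen (i : Fin 3) : 2 * X 0 * X i ∈ B := by
    fin_cases i
    exacts [mul_mem h2X0 hX0, mul_mem h2X0 hX1, hX2]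
  have hf : f ∈ Algebra.adjoin R (Set.range X) := adjoin_range_X (R := R) ▸ Algebra.mem_top
  obtain ⟨N, hN⟩ :=
    Algebra.pow_smul_mem_of_smul_subset_of_mem_adjoin (2 * X 0 : MvPolynomial (Fin 3) R)
      (Set.range X) B (by rintro _ ⟨_, ⟨i, rfl⟩, rfl⟩; exact hgen i) hf h2X0
  exact ⟨N, hN N le_rfl⟩

theorem exists_pow_mul_mem_adjoin_X_one (f : MvPolynomial (Fin 3) R) :
    ∃ N : ℕ, (2 * X 0) ^ N * f ∈ Algebra.adjoin (discAlgebra R) {X 1} :=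
  exists_pow_mul_mem_of_discAlgebra_le
    (B := (Algebra.adjoin (discAlgebra R) {(X 1 : MvPolynomial (Fin 3) R)}).restrictScalars R)
    (fun a ha => Subalgebra.algebraMap_mem (Algebra.adjoin (discAlgebra R) _) ⟨a, ha⟩)
    (Algebra.self_mem_adjoin_singleton (discAlgebra R) (X 1)) f

theorem range_discParam : (discParam R).range = discAlgebra R :=
  range_aevalAeval _ _

theorem restrictPlane_discParam (p : R[X][Y]) :
    restrictPlane R (discParam R p) = Polynomial.expand R[X] 2 p := by
  have h : (restrictPlane R).comp (discParam R) = (Polynomial.expand R[X] 2).restrictScalars R :=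
    (Polynomial.aevalAevalEquiv R _).symm.injective (by simp [restrictPlane, discParam, disc])
  exact DFunLike.congr_fun h p

theorem mem_discAlgebra_of_mul_mem {a f : MvPolynomial (Fin 3) R} (ha : a ∈ discAlgebra R)
    (ha' : a ∈ (MvPolynomial (Fin 3) R)⁰) (h : f * a ∈ discAlgebra R) : f ∈ discAlgebra R := by
  rw [← range_discParam, AlgHom.mem_range] at ha h ⊢
  obtain ⟨c, rfl⟩ := ha
  obtain ⟨p, hp⟩ := h
  have hcontract : Polynomial.contract 2 (restrictPlane R f) * c = p :=
    calc
      _ = Polynomial.contract 2 (restrictPlane R f * Polynomial.expand R[X] 2 c) :=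
        (Polynomial.contract_mul_expand two_ne_zero _ _).symm
      _ = Polynomial.contract 2 (Polynomial.expand R[X] 2 p) := by
        rw [← restrictPlane_discParam, ← map_mul, ← hp, restrictPlane_discParam]
      _ = p := Polynomial.contract_expand _ two_ne_zero
  refine ⟨Polynomial.contract 2 (restrictPlane R f), ?_⟩
  rw [← mul_cancel_right_mem_nonZeroDivisors ha', ← map_mul, hcontract, hp]

theorem kernel_n2_general [IsAddTorsionFree R] (f : MvPolynomial (Fin 3) R) :
    weitzenbock R 2 f = 0 ↔ f ∈ Algebra.adjoin R {X 0, X 1 ^ 2 - 2 * X 0 * X 2} := by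
  refine ⟨fun hf => ?_, weitzenbock_eq_zero_of_mem_discAlgebra⟩
  obtain ⟨N, hN⟩ := exists_pow_mul_mem_adjoin_X_one f
  have hpow : (2 * X 0) ^ N ∈ discAlgebra R :=
    pow_mem (mul_mem (ofNat_mem _ 2) X_zero_mem_discAlgebra) N
  have hker : weitzenbock R 2 ((2 * X 0) ^ N * f) = 0 := by
    rw [Derivation.leibniz, hf, weitzenbock_eq_zero_of_mem_discAlgebra hpow, smul_zero, smul_zero,
      add_zero]
  have hslice : weitzenbock R 2 (X 1) ∈ (MvPolynomial (Fin 3) R)⁰ := by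
    rw [show weitzenbock R 2 (X 1) = X 0 from weitzenbock_X_succ 0]
    exact isRegular_X.mem_nonZeroDivisors
  have hmul : (2 * X 0) ^ N * f ∈ discAlgebra R :=
    mem_of_mem_adjoin_of_derivation_eq_zero _
      (fun _ => weitzenbock_eq_zero_of_mem_discAlgebra) hslice hN hker
  exact mem_discAlgebra_of_mul_mem hpow (pow_mem (two_mul_X_mem_nonZeroDivisors 0) N)
    (mul_comm _ f ▸ hmul)

end Weitzenbock

/-- For `n = 2`, the kernel of the Weitzenböck derivation on
`k[x_0, x_1, x_2]` is generated by `t = x_0` and `dv = x_1² − 2·x_0·x_2`. -/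
theorem kernel_n2 (k : Type*) [Field k] [CharZero k] :
    ∀ f : MvPolynomial (Fin (2 + 1)) k,
      weitz k 2 f = 0 ↔ f ∈ Algebra.adjoin k
        ({X 0, X 1 ^ 2 - 2 * X 0 * X 2} : Set (MvPolynomial (Fin (2 + 1)) k)) := by
  intro f
  rw [weitz_eq_weitzenbock, kernel_n2_general]
end

section
/- For n = 3 (the polynomial ring k[x_0, x_1, x_2, x_3] with Weitzenböck derivation d(x_i) = x_{i−1}, d(x_0) = 0), the kernel of d equals the k-subalgebra generated by the four polynomials t = x_0, dv = x_1^2 − 2·t·x_2, tr = x_1^3 − 3·t·x_1·x_2 + 3·t^2·x_3, and c = −18·t·x_1·x_2·x_3 + 8·t·x_2^3 + 9·t^2·x_3^2 + 6·x_1^3·x_3 − 3·x_1^2·x_2^2: k[x_0,x_1,x_2,x_3]^d = k[t, dv, tr, c]. -/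
open MvPolynomial Finset

/-!
Write `t = x₀`, `B = k[x₀, x₁, x₂, x₃]` and `A = k[t, dv, tr, c]`. Since `d x₁ = t`, the variable
`x₁` is a local slice of `d`: it is transcendental over `A`, which consists of constants, and on
`A[x₁]` the derivation is `t · ∂/∂x₁`, so a constant lying in `A[x₁]` lies in `A`. Both `t x₂` and
`t² x₃` are in `A[x₁]`, hence every `f ∈ B` satisfies `tⁿ f ∈ A[x₁]` for some `n`, and
`ker d = B ∩ A[1/t]`.

It remains to see that `t b ∈ A` implies `b ∈ A`. Restricted to the plane `x₀ = x₂ = 0`, `dv` and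
`tr` become `x₁²` and `x₁³`, which satisfy only the cusp relation, while `c` becomes `6 x₁³ x₃`,
which is transcendental over `k[x₁]`. So the elements of `k[dv, tr, c]` vanishing on this
plane are the multiples in `k[dv, tr, c]` of `tr² - dv³ = t² c`, and these lie in `t A`.
-/

namespace Weitzenboeck

open scoped nonZeroDivisors Polynomial Polynomial.Bivariate

section LocalSlice

variable {R B : Type*} [CommRing R] [CommRing B] [Algebra R B]

/-- The ring of constants (the kernel) `B^D` of a derivation `D`, as a subalgebra of `B`. -/
def constants (D : Derivation R B B) : Subalgebra R B where
  carrier := {b | D b = 0}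
  mul_mem' {a b} (ha : D a = 0) (hb : D b = 0) := by simp [ha, hb]
  add_mem' {a b} (ha : D a = 0) (hb : D b = 0) := by simp [ha, hb]
  algebraMap_mem' := D.map_algebraMap

@[simp]
theorem mem_constants {D : Derivation R B B} {b : B} : b ∈ constants D ↔ D b = 0 :=
  Iff.rfl

theorem derivation_aeval {A : Type*} [CommSemiring A] [Algebra A B] {D : Derivation R B B}
    (hA : ∀ a : A, D (algebraMap A B a) = 0) (s : B) (p : A[X]) :
    D (Polynomial.aeval s p) = Polynomial.aeval s p.derivative * D s := by
  induction p using Polynomial.induction_on' with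
  | add p q hp hq => simp [hp, hq, add_mul]
  | monomial n a =>
    simp only [Polynomial.aeval_monomial, Polynomial.derivative_monomial, D.leibniz,
      D.leibniz_pow, hA, smul_eq_mul, nsmul_eq_mul, map_mul, map_natCast]
    ring

theorem transcendental_of_derivation_mem_nonZeroDivisors {A : Type*} [CommRing A] [Algebra A B]
    [FaithfulSMul A B] [IsAddTorsionFree A] {D : Derivation R B B}
    (hA : ∀ a : A, D (algebraMap A B a) = 0) {s : B} (hs : D s ∈ B⁰) : Transcendental A s := by
  refine transcendental_iff.2 fun p hp ↦ ?_
  induction hn : p.natDegree using Nat.strong_induction_on generalizing p with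
  | _ n ih =>
    have hp' : Polynomial.aeval s p.derivative = 0 := by
      rw [← mul_right_mem_nonZeroDivisors_eq_zero_iff hs, ← derivation_aeval hA, hp, map_zero]
    have hdeg : p.natDegree = 0 := by
      by_contra h
      exact h <| Polynomial.derivative_eq_zero.1 <|
        ih _ (hn ▸ Polynomial.natDegree_derivative_lt h) _ hp' rfl
    rw [Polynomial.eq_C_of_natDegree_eq_zero hdeg, Polynomial.aeval_C,
      FaithfulSMul.algebraMap_eq_zero_iff] at hp
    rw [Polynomial.eq_C_of_natDegree_eq_zero hdeg, hp, Polynomial.C_0]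

theorem mem_of_mem_adjoin_singleton_of_derivation_eq_zero [IsAddTorsionFree B]
    {D : Derivation R B B} {S : Subalgebra R B} (hS : S ≤ constants D) {s : B} (hs : D s ∈ B⁰)
    {b : B} (hb : b ∈ Algebra.adjoin S {s}) (hDb : D b = 0) : b ∈ S := by
  have hD (a : S) : D (algebraMap S B a) = 0 := hS a.2
  have : IsAddTorsionFree S :=
    Function.Injective.isAddTorsionFree (S.val : S →+ B) Subtype.val_injective
  rw [Algebra.adjoin_singleton_eq_range_aeval] at hb
  obtain ⟨p, rfl⟩ := hb
  have hp : Polynomial.aeval s p.derivative = 0 := by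
    rwa [← mul_right_mem_nonZeroDivisors_eq_zero_iff hs, ← derivation_aeval hD]
  have hp' : p.derivative = 0 :=
    transcendental_iff.1 (transcendental_of_derivation_mem_nonZeroDivisors hD hs) _ hp
  rw [Polynomial.eq_C_of_derivative_eq_zero hp']
  simp

theorem constants_eq_saturation [IsAddTorsionFree B] {D : Derivation R B B} {S : Subalgebra R B}
    (hS : S ≤ constants D) {M : Submonoid B} (hM : M ≤ S.toSubmonoid) (hM₀ : M ≤ B⁰) {s : B}
    (hs : D s ∈ B⁰) (h : ∀ b, ∃ m ∈ M, m * b ∈ Algebra.adjoin S {s}) :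
    constants D = S.saturation M hM := by
  have hD_mul {m : B} (hm : m ∈ M) (b : B) : D (m * b) = m * D b := by
    have hDm : D m = 0 := hS (hM hm)
    simp [hDm]
  ext b
  constructor
  · intro hb
    obtain ⟨m, hm, hmb⟩ := h b
    exact ⟨m, hm, mem_of_mem_adjoin_singleton_of_derivation_eq_zero hS hs hmb <| by
      rw [hD_mul hm, mem_constants.1 hb, mul_zero]⟩
  · rintro ⟨m, hm, hmb⟩
    have hDmb : m * D b = 0 := hD_mul hm b ▸ hS hmb
    exact (mul_left_mem_nonZeroDivisors_eq_zero_iff (hM₀ hm)).1 hDmb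

end LocalSlice

section Saturation

variable {R : Type*} [CommSemiring R]

theorem saturation_powers_eq_self {B : Type*} [CommSemiring B] [Algebra R B] {S : Subalgebra R B}
    {t : B} (ht : t ∈ S) (h : ∀ b, t * b ∈ S → b ∈ S) :
    S.saturation (.powers t) (Submonoid.powers_le.2 ht) = S := by
  refine le_antisymm ?_ S.le_saturation
  rintro b ⟨_, ⟨n, rfl⟩, hb⟩
  induction n with
  | zero => simpa using hb
  | succ n ih => exact ih (h _ (by rwa [← mul_assoc, ← pow_succ']))

theorem exists_eq_mul_add_of_mem_adjoin_insert {B : Type*} [CommSemiring B] [Algebra R B]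
    {t a : B} {s : Set B} (ha : a ∈ Algebra.adjoin R (insert t s)) :
    ∃ a' ∈ Algebra.adjoin R (insert t s), ∃ b ∈ Algebra.adjoin R s, a = t * a' + b := by
  have hle : Algebra.adjoin R s ≤ Algebra.adjoin R (insert t s) :=
    Algebra.adjoin_mono (Set.subset_insert t s)
  induction ha using Algebra.adjoin_induction with
  | mem x hx =>
    obtain rfl | hx := hx
    · exact ⟨1, one_mem _, 0, zero_mem _, by simp⟩
    · exact ⟨0, zero_mem _, x, Algebra.subset_adjoin hx, by simp⟩
  | algebraMap r => exact ⟨0, zero_mem _, _, algebraMap_mem _ r, by simp⟩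
  | add x y _ _ hx hy =>
    obtain ⟨x', hx', u, hu, rfl⟩ := hx
    obtain ⟨y', hy', v, hv, rfl⟩ := hy
    exact ⟨x' + y', add_mem hx' hy', u + v, add_mem hu hv, by ring⟩
  | mul x y _ hy_mem hx hy =>
    obtain ⟨x', hx', u, hu, rfl⟩ := hx
    obtain ⟨y', hy', v, hv, rfl⟩ := hy
    exact ⟨x' * (t * y' + v) + u * y', add_mem (mul_mem hx' hy_mem) (mul_mem (hle hu) hy'),
      u * v, mul_mem hu hv, by ring⟩

theorem mem_adjoin_insert_of_mul_mem {B C : Type*} [CommRing B] [Algebra R B] [Semiring C]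
    {t : B} (ht : t ∈ B⁰) {s : Set B} {φ : B →+* C} (hφt : φ t = 0)
    (hφ : ∀ b ∈ Algebra.adjoin R s, φ b = 0 → ∃ a ∈ Algebra.adjoin R (insert t s), b = t * a)
    {b : B} (hb : t * b ∈ Algebra.adjoin R (insert t s)) :
    b ∈ Algebra.adjoin R (insert t s) := by
  obtain ⟨a, ha, r, hr, hab⟩ := exists_eq_mul_add_of_mem_adjoin_insert hb
  have hφr : φ r = 0 := by simpa [hφt] using (congrArg φ hab).symm
  obtain ⟨a', ha', rfl⟩ := hφ r hr hφr
  have hb_eq : b = a + a' := by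
    rw [← mul_cancel_left_mem_nonZeroDivisors ht, hab, mul_add]
  exact hb_eq ▸ add_mem ha ha'

theorem adjoin_triple_eq_range_aevalTower {B : Type*} [CommSemiring B] [Algebra R B] (x y z : B) :
    Algebra.adjoin R {x, y, z} =
      (Polynomial.aevalTower (Polynomial.aevalAeval x y : R[X][Y] →ₐ[R] B) z).range := by
  refine le_antisymm (Algebra.adjoin_le ?_) ?_
  · rintro _ (rfl | rfl | rfl)
    · exact ⟨.C (.C .X), by simp⟩
    · exact ⟨.C .X, by simp⟩
    · exact ⟨.X, by simp⟩
  · let S := Algebra.adjoin R {x, y, z}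
    let x' : S := ⟨x, Algebra.subset_adjoin (by simp)⟩
    let y' : S := ⟨y, Algebra.subset_adjoin (by simp)⟩
    let z' : S := ⟨z, Algebra.subset_adjoin (by simp)⟩
    have hfactor : Polynomial.aevalTower (Polynomial.aevalAeval x y : R[X][Y] →ₐ[R] B) z =
        S.val.comp (Polynomial.aevalTower (Polynomial.aevalAeval x' y') z') := by
      ext <;> simp [x', y', z']
    rw [hfactor]
    rintro _ ⟨P, rfl⟩
    exact Subtype.prop _

end Saturation

section Cusp

theorem eq_zero_of_expand_two_add_X_pow_mul_expand_two_eq_zero {R : Type*} [CommSemiring R]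
    {m : ℕ} (hm : Odd m) {p q : R[X]}
    (h : Polynomial.expand R 2 p + .X ^ m * Polynomial.expand R 2 q = 0) : p = 0 ∧ q = 0 := by
  obtain rfl : q = 0 := by
    ext n
    have hn : ¬ 2 ∣ n * 2 + m := by grind
    simpa [Polynomial.coeff_expand, Polynomial.coeff_X_pow_mul, hn] using
      congrArg (Polynomial.coeff · (n * 2 + m)) h
  simpa [Polynomial.expand_eq_zero] using h

theorem cusp_dvd_of_aevalAeval_eq_zero {R : Type*} [CommRing R] {P : R[X][Y]}
    (h : Polynomial.aevalAeval (.X ^ 2 : R[X]) (.X ^ 3) P = 0) : .X ^ 2 - .C (.X ^ 3) ∣ P := by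
  nontriviality R
  let g : R[X][Y] := .X ^ 2 - .C (.X ^ 3)
  have hg : g.Monic := Polynomial.monic_X_pow_sub_C _ two_ne_zero
  have hg_deg : g.natDegree = 2 := Polynomial.natDegree_X_pow_sub_C
  have hg_one : g ≠ 1 := fun h ↦ by simp [h] at hg_deg
  have hg_cusp : Polynomial.aevalAeval (.X ^ 2 : R[X]) (.X ^ 3) g = 0 := by
    rw [map_sub, map_pow, Polynomial.aevalAeval_Y, Polynomial.aevalAeval_C, map_pow,
      Polynomial.aeval_X]
    ring
  obtain ⟨q, p, hpq⟩ := Polynomial.exists_eq_X_add_C_of_natDegree_le_one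
    (Nat.le_of_lt_succ (hg_deg ▸ Polynomial.natDegree_modByMonic_lt P hg hg_one))
  have hrem : Polynomial.expand R 2 p + .X ^ 3 * Polynomial.expand R 2 q = 0 := by
    rw [← Polynomial.modByMonic_add_div P g, hpq, map_add, map_mul _ g, hg_cusp, zero_mul,
      add_zero, map_add, map_mul, Polynomial.aevalAeval_C, Polynomial.aevalAeval_C,
      Polynomial.aevalAeval_Y] at h
    rw [← h, add_comm, mul_comm]
    rfl
  obtain ⟨rfl, rfl⟩ := eq_zero_of_expand_two_add_X_pow_mul_expand_two_eq_zero (by decide) hrem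
  exact (Polynomial.modByMonic_eq_zero_iff_dvd hg).1 (by simpa using hpq)

end Cusp

section Generators

variable (R : Type*) [CommRing R]

/-- The generator `dv` of degree two of the kernel. -/
noncomputable def dv : MvPolynomial (Fin (3 + 1)) R :=
  X 1 ^ 2 - 2 * X 0 * X 2

/-- The generator `tr` of degree three of the kernel. -/
noncomputable def tr : MvPolynomial (Fin (3 + 1)) R :=
  X 1 ^ 3 - 3 * X 0 * X 1 * X 2 + 3 * X 0 ^ 2 * X 3

/-- The generator `c` of degree four of the kernel. -/
noncomputable def c : MvPolynomial (Fin (3 + 1)) R :=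
  -18 * X 0 * X 1 * X 2 * X 3 + 8 * X 0 * X 2 ^ 3 + 9 * X 0 ^ 2 * X 3 ^ 2
    + 6 * X 1 ^ 3 * X 3 - 3 * X 1 ^ 2 * X 2 ^ 2

theorem tr_sq_sub_dv_cube : tr R ^ 2 - dv R ^ 3 = X 0 ^ 2 * c R := by
  unfold tr dv c
  ring

/-- The algebra `R[t, dv, tr, c]`, where `t = x₀`. -/
noncomputable def generated : Subalgebra R (MvPolynomial (Fin (3 + 1)) R) :=
  Algebra.adjoin R {X 0, dv R, tr R, c R}

variable {R}

theorem X_zero_mem_generated : X 0 ∈ generated R := Algebra.subset_adjoin (by simp)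

theorem dv_mem_generated : dv R ∈ generated R := Algebra.subset_adjoin (by simp)

theorem tr_mem_generated : tr R ∈ generated R := Algebra.subset_adjoin (by simp)

theorem c_mem_generated : c R ∈ generated R := Algebra.subset_adjoin (by simp)

end Generators

section Derivation

variable (R : Type*) [CommRing R]

/-- The Weitzenböck derivation `x₃ ↦ x₂ ↦ x₁ ↦ x₀ ↦ 0` over an arbitrary coefficient ring. -/
noncomputable def weitzThree :
    Derivation R (MvPolynomial (Fin (3 + 1)) R) (MvPolynomial (Fin (3 + 1)) R) :=
  mkDerivation R ![0, X 0, X 1, X 2]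

theorem weitz_three_eq_weitzThree (k : Type*) [Field k] [CharZero k] :
    weitz k 3 = weitzThree k := by
  refine MvPolynomial.derivation_ext fun i ↦ ?_
  fin_cases i <;> simp [weitz, weitzThree, mkDerivation_X]

theorem weitzThree_X_one : weitzThree R (X 1) = X 0 := by
  simp [weitzThree, mkDerivation_X]

theorem generated_le_constants : generated R ≤ constants (weitzThree R) := by
  have hnum (n : ℕ) [n.AtLeastTwo] :
      weitzThree R (ofNat(n) : MvPolynomial (Fin (3 + 1)) R) = 0 := by
    simpa only [Nat.cast_ofNat] using (weitzThree R).map_natCast (OfNat.ofNat n)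
  have h0 : weitzThree R (X 0) = 0 := by simp [weitzThree, mkDerivation_X]
  have h2 : weitzThree R (X 2) = X 1 := by simp [weitzThree, mkDerivation_X]
  have h3 : weitzThree R (X 3) = X 2 := by simp [weitzThree, mkDerivation_X]
  refine Algebra.adjoin_le ?_
  rintro _ (rfl | rfl | rfl | rfl) <;>
    simp only [SetLike.mem_coe, mem_constants, dv, tr, c, map_add, map_sub, map_neg,
      Derivation.leibniz, Derivation.leibniz_pow, hnum, h0, weitzThree_X_one, h2, h3,
      smul_eq_mul, nsmul_eq_mul] <;>
    push_cast <;> ring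

variable {R}

theorem exists_X_zero_pow_mul_mem [Algebra ℚ R] (f : MvPolynomial (Fin (3 + 1)) R) :
    ∃ m ∈ Submonoid.powers (X 0), m * f ∈ Algebra.adjoin (generated R) {X 1} := by
  set T := Algebra.adjoin (generated R) {(X 1 : MvPolynomial (Fin (3 + 1)) R)}
  have hT {a} (ha : a ∈ generated R) : a ∈ T := T.algebraMap_mem ⟨a, ha⟩
  have h0 : X 0 ∈ T := hT X_zero_mem_generated
  have h1 : X 1 ∈ T := Algebra.self_mem_adjoin_singleton _ _
  have h2 : X 0 * X 2 ∈ T := by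
    have h : (2 : ℚ) • (X 0 * X 2) = X 1 ^ 2 - dv R := by
      simp only [ofNat_smul_eq_nsmul, nsmul_eq_mul, dv]
      push_cast
      ring
    rw [← Subalgebra.mem_toSubmodule, ← Submodule.smul_mem_iff _ (two_ne_zero' ℚ), h,
      Subalgebra.mem_toSubmodule]
    exact sub_mem (pow_mem h1 2) (hT dv_mem_generated)
  have h3 : X 0 ^ 2 * X 3 ∈ T := by
    have h : (3 : ℚ) • (X 0 ^ 2 * X 3) = tr R - X 1 ^ 3 + 3 * (X 1 * (X 0 * X 2)) := by
      simp only [ofNat_smul_eq_nsmul, nsmul_eq_mul, tr]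
      push_cast
      ring
    rw [← Subalgebra.mem_toSubmodule, ← Submodule.smul_mem_iff _ (three_ne_zero' ℚ), h,
      Subalgebra.mem_toSubmodule]
    exact add_mem (sub_mem (hT tr_mem_generated) (pow_mem h1 3))
      (mul_mem (ofNat_mem T 3) (mul_mem h1 h2))
  let T' := (T.restrictScalars R).saturation (.powers (X 0)) (Submonoid.powers_le.2 h0)
  suffices hT' : T' = ⊤ from (hT' ▸ Algebra.mem_top : f ∈ T')
  rw [eq_top_iff, ← MvPolynomial.adjoin_range_X, Algebra.adjoin_le_iff]
  rintro _ ⟨i, rfl⟩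
  fin_cases i
  · exact ⟨1, one_mem _, by simpa using h0⟩
  · exact ⟨1, one_mem _, by simpa using h1⟩
  · exact ⟨X 0, Submonoid.mem_powers _, h2⟩
  · exact ⟨X 0 ^ 2, pow_mem (Submonoid.mem_powers _) 2, h3⟩

end Derivation

section PlaneRestriction

variable (R : Type*) [CommRing R]

/-- Restriction of polynomials to the plane `x₀ = x₂ = 0`, whose coordinates `x₁` and `x₃` are the
inner and the outer variable of `R[X][Y]`. -/
noncomputable def planeRestriction : MvPolynomial (Fin (3 + 1)) R →ₐ[R] R[X][Y] :=
  MvPolynomial.aeval ![0, .C .X, 0, .X]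

theorem planeRestriction_X_zero : planeRestriction R (X 0) = 0 := by
  simp [planeRestriction]

theorem planeRestriction_dv : planeRestriction R (dv R) = .C (.X ^ 2) := by
  simp [planeRestriction, dv]

theorem planeRestriction_tr : planeRestriction R (tr R) = .C (.X ^ 3) := by
  simp [planeRestriction, tr]

theorem planeRestriction_c : planeRestriction R (c R) = .C (6 * .X ^ 3) * .X := by
  have h6 : (.C 6 : R[X][Y]) = 6 := map_ofNat Polynomial.C 6
  simp [planeRestriction, c, h6]

variable {R}

theorem planeRestriction_aevalTower (P : R[X][Y][X]) :
    planeRestriction R (Polynomial.aevalTower (Polynomial.aevalAeval (dv R) (tr R)) (c R) P) =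
      (P.map (Polynomial.aevalAeval (.X ^ 2 : R[X]) (.X ^ 3)).toRingHom).comp
        (.C (6 * .X ^ 3) * .X) := by
  have hcusp : (planeRestriction R).comp (Polynomial.aevalAeval (dv R) (tr R)) =
      Polynomial.CAlgHom.comp (Polynomial.aevalAeval (.X ^ 2 : R[X]) (.X ^ 3)) := by
    ext <;> simp [planeRestriction_dv, planeRestriction_tr]
  rw [Polynomial.comp, Polynomial.eval₂_map, ← planeRestriction_c]
  exact (Polynomial.hom_eval₂ P _ (planeRestriction R).toRingHom (c R)).trans
    (congrArg (Polynomial.eval₂ · _ P) (congrArg AlgHom.toRingHom hcusp))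

theorem exists_eq_X_zero_mul_of_planeRestriction_eq_zero (h6 : IsUnit (6 : R))
    {b : MvPolynomial (Fin (3 + 1)) R} (hb : b ∈ Algebra.adjoin R {dv R, tr R, c R})
    (hb₀ : planeRestriction R b = 0) : ∃ a ∈ generated R, b = X 0 * a := by
  rw [adjoin_triple_eq_range_aevalTower] at hb
  obtain ⟨P, rfl⟩ := hb
  have h6' : IsUnit (6 : R[X]) := by simpa only [map_ofNat] using h6.map Polynomial.C
  have hreg : (6 * .X ^ 3 : R[X]) ∈ R[X]⁰ :=
    mul_mem h6'.mem_nonZeroDivisors (Polynomial.monic_X_pow 3).mem_nonZeroDivisors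
  have hmap : P.map (Polynomial.aevalAeval (.X ^ 2 : R[X]) (.X ^ 3)).toRingHom = 0 :=
    (Polynomial.comp_C_mul_X_eq_zero_iff hreg).1 ((planeRestriction_aevalTower P).symm.trans hb₀)
  have hcoeff (n : ℕ) : Polynomial.aevalAeval (.X ^ 2 : R[X]) (.X ^ 3) (P.coeff n) = 0 := by
    simpa using congrArg (Polynomial.coeff · n) hmap
  have hdvd : .C (.X ^ 2 - .C (.X ^ 3)) ∣ P :=
    (Polynomial.C_dvd_iff_dvd_coeff _ _).2 fun n ↦ cusp_dvd_of_aevalAeval_eq_zero (hcoeff n)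
  obtain ⟨Q, rfl⟩ := hdvd
  set q := Polynomial.aevalTower (Polynomial.aevalAeval (dv R) (tr R)) (c R) Q with hq
  have hq_mem : q ∈ generated R :=
    Algebra.adjoin_mono (Set.subset_insert _ _)
      (adjoin_triple_eq_range_aevalTower (R := R) (dv R) (tr R) (c R) ▸ ⟨Q, rfl⟩)
  refine ⟨X 0 * c R * q, mul_mem (mul_mem X_zero_mem_generated c_mem_generated) hq_mem, ?_⟩
  calc _ = (tr R ^ 2 - dv R ^ 3) * q := by simp [hq]
    _ = X 0 * (X 0 * c R * q) := by rw [tr_sq_sub_dv_cube]; ring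

end PlaneRestriction

end Weitzenboeck

open Weitzenboeck in
theorem kernel_n3_general (R : Type*) [CommRing R] [Algebra ℚ R] :
    constants (weitzThree R) = generated R := by
  have : IsAddTorsionFree (MvPolynomial (Fin (3 + 1)) R) := .of_module_rat _
  have ht : (X 0 : MvPolynomial (Fin (3 + 1)) R) ∈ nonZeroDivisors _ :=
    isRegular_X.mem_nonZeroDivisors
  have h6 : IsUnit (6 : R) := by
    simpa only [map_ofNat] using (IsUnit.mk0 (6 : ℚ) (by norm_num)).map (algebraMap ℚ R)
  rw [constants_eq_saturation (generated_le_constants R)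
    (Submonoid.powers_le.2 X_zero_mem_generated) (Submonoid.powers_le.2 ht)
    (weitzThree_X_one R ▸ ht) exists_X_zero_pow_mul_mem]
  exact saturation_powers_eq_self X_zero_mem_generated fun _ ↦
    mem_adjoin_insert_of_mul_mem ht (φ := (planeRestriction R).toRingHom)
      (planeRestriction_X_zero R)
      fun _ ↦ exists_eq_X_zero_mul_of_planeRestriction_eq_zero h6

/-- For `n = 3`, the kernel of the Weitzenböck derivation on
`k[x_0,…,x_3]` is generated by `t`, `dv`, `tr`, `c`. -/
theorem kernel_n3 (k : Type*) [Field k] [CharZero k] :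
    ∀ f : MvPolynomial (Fin (3 + 1)) k,
      weitz k 3 f = 0 ↔ f ∈ Algebra.adjoin k
        ({X 0,
          X 1 ^ 2 - 2 * X 0 * X 2,
          X 1 ^ 3 - 3 * X 0 * X 1 * X 2 + 3 * X 0 ^ 2 * X 3,
          -18 * X 0 * X 1 * X 2 * X 3 + 8 * X 0 * X 2 ^ 3 + 9 * X 0 ^ 2 * X 3 ^ 2
            + 6 * X 1 ^ 3 * X 3 - 3 * X 1 ^ 2 * X 2 ^ 2} :
          Set (MvPolynomial (Fin (3 + 1)) k)) := by
  intro f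
  rw [Weitzenboeck.weitz_three_eq_weitzThree, ← Weitzenboeck.mem_constants, kernel_n3_general]
  rfl
end

section
/- For n = 4 (the polynomial ring k[x_0, x_1, x_2, x_3, x_4] with Weitzenböck derivation d(x_i) = x_{i−1}, d(x_0) = 0), the kernel of d equals the k-subalgebra generated by the five polynomials t = x_0, d_1 = x_1^2 − 2·t·x_2, d_2 = −2·t·x_4 + 2·x_1·x_3 − x_2^2, tr_1 = x_1^3 − 3·t·x_1·x_2 + 3·t^2·x_3, and tr_2 = 12·t·x_2·x_4 − 9·t·x_3^2 − 6·x_1^2·x_4 + 6·x_1·x_2·x_3 − 2·x_2^3: k[x_0,…,x_4]^d = k[t, d_1, d_2, tr_1, tr_2]. -/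
/-!
The slice `x₁`, with `d x₁ = t`, makes every polynomial `f` satisfy `tᴺ f ∈ A[x₁]` for some `N`,
where `A = k[t, d₁, d₂, tr₁, tr₂]`. Since `d` vanishes on `A` and `d x₁ ≠ 0`, the element `x₁` is
transcendental over `A` and the constants of `A[x₁]` are exactly `A`; so `f ∈ ker d` gives
`tᴺ f ∈ A`. It remains to divide by `t` inside `A`. Modulo `t` the only relation between the
generators is `tr₁² = d₁³`, and it lifts to the syzygy
`tr₁² = d₁³ + t (3 t d₁ d₂ - t² tr₂)`: every element of `A` is `t a + p + tr₁ q` with `a ∈ A` and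
`p, q ∈ k[d₁, d₂, tr₂]`, and `p + tr₁ q` is divisible by `t` only if it is zero.
-/

open MvPolynomial Finset

section LocalSlice

theorem transcendental_of_derivation_ne_zero {A B : Type*} [CommRing A] [CommRing B] [IsDomain B]
    [CharZero B] [Algebra A B] [FaithfulSMul A B] (d : Derivation A B B) {s : B} (hs : d s ≠ 0) :
    Transcendental A s := by
  have : IsAddTorsionFree A :=
    (FaithfulSMul.algebraMap_injective A B).isAddTorsionFree (algebraMap A B).toAddMonoidHom
  refine transcendental_iff.2 fun q hq => ?_
  induction hn : q.natDegree using Nat.strong_induction_on generalizing q with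
  | _ n ih =>
    have h_const : Polynomial.derivative q = 0 := by
      by_contra h_ne
      have h_aeval : Polynomial.aeval s (Polynomial.derivative q) = 0 := by
        simpa [hq, hs] using (d.map_aeval q s).symm
      have h_pos : q.natDegree ≠ 0 := mt Polynomial.derivative_eq_zero.2 h_ne
      exact h_ne (ih _ (hn ▸ Polynomial.natDegree_derivative_lt h_pos) _ h_aeval rfl)
    rw [Polynomial.eq_C_of_derivative_eq_zero h_const] at hq ⊢
    simpa using hq

theorem mem_bot_of_mem_adjoin_singleton_of_derivation_eq_zero {A B : Type*} [CommRing A]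
    [CommRing B] [IsDomain B] [CharZero B] [Algebra A B] [FaithfulSMul A B]
    (d : Derivation A B B) {s b : B} (hs : d s ≠ 0) (hb : b ∈ Algebra.adjoin A {s})
    (hdb : d b = 0) : b ∈ (⊥ : Subalgebra A B) := by
  have : IsAddTorsionFree A :=
    (FaithfulSMul.algebraMap_injective A B).isAddTorsionFree (algebraMap A B).toAddMonoidHom
  rw [Algebra.adjoin_singleton_eq_range_aeval] at hb
  obtain ⟨q, rfl⟩ := hb
  have h_aeval : Polynomial.aeval s (Polynomial.derivative q) = 0 := by
    simpa [hs] using (d.map_aeval q s).symm.trans hdb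
  have h_const : Polynomial.derivative q = 0 :=
    transcendental_iff.1 (transcendental_of_derivation_ne_zero d hs) _ h_aeval
  refine Algebra.mem_bot.2 ⟨q.coeff 0, ?_⟩
  conv_rhs => rw [Polynomial.eq_C_of_derivative_eq_zero h_const]
  exact (Polynomial.aeval_C s _).symm

theorem mem_of_pow_mul_mem {M σ : Type*} [Monoid M] [SetLike σ M] {S : σ} {t : M}
    (h : ∀ b, t * b ∈ S → b ∈ S) (n : ℕ) {b : M} (hb : t ^ n * b ∈ S) : b ∈ S := by
  induction n with
  | zero => simpa using hb
  | succ n ih => exact ih (h _ (by rwa [← mul_assoc, ← pow_succ']))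

variable {R B : Type*} [CommRing R] [CommRing B] [Algebra R B]

/-- A derivation regarded as linear over a subalgebra of its constants. -/
def derivationOverConstants (d : Derivation R B B) (A : Subalgebra R B) (hA : ∀ a ∈ A, d a = 0) :
    Derivation A B B :=
  Derivation.mk'
    { toFun := d
      map_add' := map_add d
      map_smul' := fun a b => by simp [Subalgebra.smul_def, hA a a.2] }
    fun a b => d.leibniz a b

theorem derivation_eq_zero_iff_mem_of_slice [IsDomain B] [CharZero B] (d : Derivation R B B)
    {A : Subalgebra R B} (hA : ∀ a ∈ A, d a = 0) {s : B} (hs : d s ≠ 0) (hsA : d s ∈ A)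
    (h_denom : ∀ b, ∃ n, d s ^ n * b ∈ Algebra.adjoin R (A ∪ {s}))
    (h_sat : ∀ b, d s * b ∈ A → b ∈ A) {f : B} :
    d f = 0 ↔ f ∈ A := by
  refine ⟨fun hf => ?_, hA f⟩
  obtain ⟨n, hn⟩ := h_denom f
  rw [← Algebra.restrictScalars_adjoin, Subalgebra.mem_restrictScalars] at hn
  have h_zero : d (d s ^ n * f) = 0 := by simp [hf, hA _ (pow_mem hsA n)]
  have h_mem : d s ^ n * f ∈ A := by
    obtain ⟨a, ha⟩ := Algebra.mem_bot.1 <| mem_bot_of_mem_adjoin_singleton_of_derivation_eq_zero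
      (derivationOverConstants d A hA) hs hn h_zero
    exact ha ▸ a.2
  exact mem_of_pow_mul_mem h_sat n h_mem

end LocalSlice

section Adjoin

variable {R B : Type*} [CommRing R] [CommRing B] [Algebra R B]

theorem exists_pow_mul_mem_of_mem_adjoin {S : Subalgebra R B} {t : B} (ht : t ∈ S) {G : Set B}
    (hG : ∀ g ∈ G, ∃ n : ℕ, t ^ n * g ∈ S) {b : B} (hb : b ∈ Algebra.adjoin R G) :
    ∃ n : ℕ, t ^ n * b ∈ S := by
  induction hb using Algebra.adjoin_induction with
  | mem g hg => exact hG g hg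
  | algebraMap r => exact ⟨0, by simp⟩
  | add x y _ _ hx hy =>
    obtain ⟨n, hn⟩ := hx
    obtain ⟨m, hm⟩ := hy
    refine ⟨n + m, ?_⟩
    rw [show t ^ (n + m) * (x + y) = t ^ m * (t ^ n * x) + t ^ n * (t ^ m * y) by ring]
    exact add_mem (mul_mem (pow_mem ht m) hn) (mul_mem (pow_mem ht n) hm)
  | mul x y _ _ hx hy =>
    obtain ⟨n, hn⟩ := hx
    obtain ⟨m, hm⟩ := hy
    refine ⟨n + m, ?_⟩
    rw [show t ^ (n + m) * (x * y) = (t ^ n * x) * (t ^ m * y) by ring]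
    exact mul_mem hn hm

theorem exists_eq_mul_add_add_mul_of_mem_adjoin {t u s c : B} {G : Set B}
    (hs : s ∈ Algebra.adjoin R G) (hc : c ∈ Algebra.adjoin R (insert t (insert u G)))
    (hu : u ^ 2 = s + t * c) {f : B} (hf : f ∈ Algebra.adjoin R (insert t (insert u G))) :
    ∃ a ∈ Algebra.adjoin R (insert t (insert u G)),
      ∃ p ∈ Algebra.adjoin R G, ∃ q ∈ Algebra.adjoin R G, f = t * a + (p + u * q) := by
  have h_le : Algebra.adjoin R G ≤ Algebra.adjoin R (insert t (insert u G)) :=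
    Algebra.adjoin_mono ((Set.subset_insert u G).trans (Set.subset_insert t _))
  have hu_mem : u ∈ Algebra.adjoin R (insert t (insert u G)) :=
    Algebra.subset_adjoin (by simp)
  induction hf using Algebra.adjoin_induction with
  | mem g hg =>
    rcases hg with rfl | rfl | hg
    · exact ⟨1, one_mem _, 0, zero_mem _, 0, zero_mem _, by ring⟩
    · exact ⟨0, zero_mem _, 0, zero_mem _, 1, one_mem _, by ring⟩
    · exact ⟨0, zero_mem _, g, Algebra.subset_adjoin hg, 0, zero_mem _, by ring⟩
  | algebraMap r => exact ⟨0, zero_mem _, _, Subalgebra.algebraMap_mem _ r, 0, zero_mem _, by ring⟩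
  | add x y _ _ hx hy =>
    obtain ⟨a, ha, p, hp, q, hq, rfl⟩ := hx
    obtain ⟨b, hb, p', hp', q', hq', rfl⟩ := hy
    exact ⟨a + b, add_mem ha hb, p + p', add_mem hp hp', q + q', add_mem hq hq', by ring⟩
  | mul x y _ hy_mem hx hy =>
    obtain ⟨a, ha, p, hp, q, hq, rfl⟩ := hx
    obtain ⟨b, hb, p', hp', q', hq', hy⟩ := hy
    refine ⟨a * y + (p + u * q) * b + c * (q * q'), ?_, p * p' + s * (q * q'), ?_,
      p * q' + q * p', ?_, by linear_combination (p + u * q) * hy + q * q' * hu⟩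
    · have h_pq := add_mem (h_le hp) (mul_mem hu_mem (h_le hq))
      exact add_mem (add_mem (mul_mem ha hy_mem) (mul_mem h_pq hb))
        (mul_mem hc (mul_mem (h_le hq) (h_le hq')))
    · exact add_mem (mul_mem hp hp') (mul_mem hs (mul_mem hq hq'))
    · exact add_mem (mul_mem hp hq') (mul_mem hq hp')

theorem mem_adjoin_of_mul_mem_adjoin [IsDomain B] {t u s c : B} {G : Set B} (ht : t ≠ 0)
    (hs : s ∈ Algebra.adjoin R G) (hc : c ∈ Algebra.adjoin R (insert t (insert u G)))
    (hu : u ^ 2 = s + t * c)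
    (h_dvd : ∀ p ∈ Algebra.adjoin R G, ∀ q ∈ Algebra.adjoin R G, t ∣ p + u * q → p + u * q = 0)
    {b : B} (hb : t * b ∈ Algebra.adjoin R (insert t (insert u G))) :
    b ∈ Algebra.adjoin R (insert t (insert u G)) := by
  obtain ⟨a, ha, p, hp, q, hq, h⟩ := exists_eq_mul_add_add_mul_of_mem_adjoin hs hc hu hb
  have h_zero : p + u * q = 0 := h_dvd p hp q hq ⟨b - a, by linear_combination -h⟩
  rw [h_zero, add_zero] at h
  exact mul_left_cancel₀ ht h ▸ ha

end Adjoin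

section PowerPoints

variable {R : Type*} [CommRing R] [IsDomain R] {n : ℕ}

theorem infinite_image_pow_compl_zero [Infinite R] {m : ℕ} (hm : m ≠ 0) :
    ((fun x : R => x ^ m) '' {0}ᶜ).Infinite := by
  intro h_fin
  have h_fibre (a : R) : ((fun x : R => x ^ m) ⁻¹' {a}).Finite := by
    classical
    refine (Polynomial.nthRoots m a).toFinset.finite_toSet.subset fun x hx => ?_
    simpa [Polynomial.mem_nthRoots (Nat.pos_of_ne_zero hm)] using hx
  exact (Set.finite_singleton (0 : R)).infinite_compl
    ((h_fin.preimage' fun a _ => h_fibre a).subset (Set.subset_preimage_image _ _))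

theorem eq_zero_of_eval_vecCons_pow_eq_zero [Infinite R] {p : MvPolynomial (Fin (n + 1)) R} {m : ℕ}
    (hm : m ≠ 0) (h : ∀ x ≠ 0, ∀ v, eval (Matrix.vecCons (x ^ m) v) p = 0) : p = 0 := by
  refine funext_set (Fin.cons ((fun x : R => x ^ m) '' {0}ᶜ) fun _ => Set.univ)
    (Fin.cases (infinite_image_pow_compl_zero hm) fun _ => Set.infinite_univ) fun v hv => ?_
  obtain ⟨x, hx, hxv⟩ : v 0 ∈ (fun x : R => x ^ m) '' {0}ᶜ := hv 0 trivial
  rw [map_zero, ← Matrix.cons_head_tail v, Matrix.vecHead, ← hxv]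
  exact h x hx _

/-- The substitution `x ↦ -x` separates the even part `p` from the odd part `q`. -/
theorem eq_zero_and_eq_zero_of_eval_vecCons_sq_add_pow_mul [CharZero R]
    {p q : MvPolynomial (Fin (n + 1)) R} {m : ℕ} (hm : Odd m)
    (h : ∀ x ≠ 0, ∀ v, eval (Matrix.vecCons (x ^ 2) v) p
      + x ^ m * eval (Matrix.vecCons (x ^ 2) v) q = 0) :
    p = 0 ∧ q = 0 := by
  have hq (x : R) (hx : x ≠ 0) (v) : eval (Matrix.vecCons (x ^ 2) v) q = 0 := by
    have h_neg := h (-x) (neg_ne_zero.2 hx) v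
    rw [neg_sq, hm.neg_pow] at h_neg
    have h_two : 2 * x ^ m * eval (Matrix.vecCons (x ^ 2) v) q = 0 := by
      linear_combination h x hx v - h_neg
    exact (mul_eq_zero.1 h_two).resolve_left (mul_ne_zero two_ne_zero (pow_ne_zero m hx))
  have hp (x : R) (hx : x ≠ 0) (v) : eval (Matrix.vecCons (x ^ 2) v) p = 0 := by
    simpa [hq x hx v] using h x hx v
  exact ⟨eq_zero_of_eval_vecCons_pow_eq_zero two_ne_zero hp,
    eq_zero_of_eval_vecCons_pow_eq_zero two_ne_zero hq⟩

end PowerPoints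

namespace weitz

section Generators

variable (k : Type*) [CommRing k]

/-- The generator `d_1`, the quadratic constant in `x_0, x_1, x_2`. -/
noncomputable def d₁ : MvPolynomial (Fin (4 + 1)) k := X 1 ^ 2 - 2 * X 0 * X 2

/-- The generator `d_2`, the quadratic constant involving `x_4`. -/
noncomputable def d₂ : MvPolynomial (Fin (4 + 1)) k := -2 * X 0 * X 4 + 2 * X 1 * X 3 - X 2 ^ 2

/-- The generator `tr_1`, the cubic constant in `x_0, x_1, x_2, x_3`. -/
noncomputable def tr₁ : MvPolynomial (Fin (4 + 1)) k :=
  X 1 ^ 3 - 3 * X 0 * X 1 * X 2 + 3 * X 0 ^ 2 * X 3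

/-- The generator `tr_2`, the cubic constant involving `x_4`. -/
noncomputable def tr₂ : MvPolynomial (Fin (4 + 1)) k :=
  12 * X 0 * X 2 * X 4 - 9 * X 0 * X 3 ^ 2 - 6 * X 1 ^ 2 * X 4
    + 6 * X 1 * X 2 * X 3 - 2 * X 2 ^ 3

/-- The candidate `k[t, d_1, d_2, tr_1, tr_2]` for the kernel, where `t = x_0`. -/
noncomputable def generated : Subalgebra k (MvPolynomial (Fin (4 + 1)) k) :=
  Algebra.adjoin k {X 0, d₁ k, d₂ k, tr₁ k, tr₂ k}

theorem tr₁_sq :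
    tr₁ k ^ 2 = d₁ k ^ 3 + X 0 * (3 * X 0 * d₁ k * d₂ k - X 0 ^ 2 * tr₂ k) := by
  simp only [d₁, d₂, tr₁, tr₂]
  ring

theorem generated_eq_adjoin_insert_range :
    generated k = Algebra.adjoin k (insert (X 0) (insert (tr₁ k)
      (Set.range ![d₁ k, d₂ k, tr₂ k]))) := by
  rw [generated]
  simp only [Matrix.range_cons, Matrix.range_empty, Set.union_empty, Set.singleton_union]
  rw [Set.insert_comm (tr₁ k) (d₁ k), Set.insert_comm (tr₁ k) (d₂ k)]

variable {k}

theorem generators_mem_generated :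
    X 0 ∈ generated k ∧ d₁ k ∈ generated k ∧ d₂ k ∈ generated k ∧ tr₁ k ∈ generated k ∧
      tr₂ k ∈ generated k := by
  refine ⟨?_, ?_, ?_, ?_, ?_⟩ <;> exact Algebra.subset_adjoin (by simp)

end Generators

variable {k : Type*} [Field k] [CharZero k]

theorem eq_zero_and_eq_zero_of_X_zero_dvd {p q : MvPolynomial (Fin 3) k}
    (h : X 0 ∣ aeval ![d₁ k, d₂ k, tr₂ k] p + tr₁ k * aeval ![d₁ k, d₂ k, tr₂ k] q) :
    p = 0 ∧ q = 0 := by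
  refine eq_zero_and_eq_zero_of_eval_vecCons_sq_add_pow_mul (m := 3) (by decide) fun x hx v => ?_
  -- This point of the hyperplane `x_0 = 0` has `(d_1, d_2, tr_2) = (x², v 0, v 1)` and `tr_1 = x³`.
  let φ : MvPolynomial (Fin (4 + 1)) k →ₐ[k] k :=
    aeval ![0, x, 0, v 0 / (2 * x), -v 1 / (6 * x ^ 2)]
  have h_x₃ : 2 * x * (v 0 / (2 * x)) = v 0 := by field_simp
  have h_x₄ : 6 * x ^ 2 * (-v 1 / (6 * x ^ 2)) = -v 1 := by field_simp
  have hφ₀ : φ (X 0) = 0 := by simp [φ]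
  have hφ_tr₁ : φ (tr₁ k) = x ^ 3 := by simp [φ, tr₁]
  have hφ (r : MvPolynomial (Fin 3) k) :
      φ (aeval ![d₁ k, d₂ k, tr₂ k] r) = eval (Matrix.vecCons (x ^ 2) v) r := by
    rw [comp_aeval_apply, aeval_eq_eval]
    congr 2
    ext i
    fin_cases i
    · simp [φ, d₁]
    · simp [φ, d₂, h_x₃]
    · simp [φ, tr₂, h_x₄]
  have h_dvd := map_dvd φ h
  rwa [hφ₀, zero_dvd_iff, map_add, map_mul, hφ, hφ, hφ_tr₁] at h_dvd

theorem mem_generated_of_X_zero_mul_mem {f : MvPolynomial (Fin (4 + 1)) k}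
    (hf : X 0 * f ∈ generated k) : f ∈ generated k := by
  obtain ⟨h₀, h₁, h₂, -, h₄⟩ := generators_mem_generated (k := k)
  have h_lift : 3 * X 0 * d₁ k * d₂ k - X 0 ^ 2 * tr₂ k ∈ generated k :=
    sub_mem (mul_mem (mul_mem (mul_mem (ofNat_mem _ 3) h₀) h₁) h₂) (mul_mem (pow_mem h₀ 2) h₄)
  rw [generated_eq_adjoin_insert_range] at hf h_lift ⊢
  refine mem_adjoin_of_mul_mem_adjoin (X_ne_zero 0)
    (pow_mem (Algebra.subset_adjoin (Set.mem_range_self 0)) 3) h_lift (tr₁_sq k) ?_ hf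
  rw [Algebra.adjoin_range_eq_range_aeval]
  rintro _ ⟨p, rfl⟩ _ ⟨q, rfl⟩ h
  obtain ⟨rfl, rfl⟩ := eq_zero_and_eq_zero_of_X_zero_dvd h
  simp

section Slice

variable {S : Subalgebra k (MvPolynomial (Fin (4 + 1)) k)}

theorem X_zero_mul_X_two_mem (h_x₁ : X 1 ∈ S) (h_d₁ : d₁ k ∈ S) : X 0 * X 2 ∈ S := by
  rw [← Subalgebra.mem_toSubmodule, ← Submodule.smul_mem_iff _ (two_ne_zero' k),
    Subalgebra.mem_toSubmodule]
  have : (2 : k) • (X 0 * X 2) = X 1 ^ 2 - d₁ k := by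
    simp only [smul_eq_C_mul, map_ofNat, d₁]
    ring
  rw [this]
  exact sub_mem (pow_mem h_x₁ 2) h_d₁

theorem X_zero_sq_mul_X_three_mem (h_x₁ : X 1 ∈ S) (h_d₁ : d₁ k ∈ S) (h_tr₁ : tr₁ k ∈ S) :
    X 0 ^ 2 * X 3 ∈ S := by
  rw [← Subalgebra.mem_toSubmodule, ← Submodule.smul_mem_iff _ (three_ne_zero' k),
    Subalgebra.mem_toSubmodule]
  have : (3 : k) • (X 0 ^ 2 * X 3) = tr₁ k - X 1 ^ 3 + 3 * (X 1 * (X 0 * X 2)) := by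
    simp only [smul_eq_C_mul, map_ofNat, tr₁]
    ring
  rw [this]
  exact add_mem (sub_mem h_tr₁ (pow_mem h_x₁ 3))
    (mul_mem (ofNat_mem S 3) (mul_mem h_x₁ (X_zero_mul_X_two_mem h_x₁ h_d₁)))

theorem X_zero_pow_three_mul_X_four_mem (h_x₀ : X 0 ∈ S) (h_x₁ : X 1 ∈ S) (h_d₁ : d₁ k ∈ S)
    (h_d₂ : d₂ k ∈ S) (h_tr₁ : tr₁ k ∈ S) : X 0 ^ 3 * X 4 ∈ S := by
  rw [← Subalgebra.mem_toSubmodule, ← Submodule.smul_mem_iff _ (two_ne_zero' k),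
    Subalgebra.mem_toSubmodule]
  have : (2 : k) • (X 0 ^ 3 * X 4) =
      2 * (X 1 * (X 0 ^ 2 * X 3)) - (X 0 * X 2) ^ 2 - X 0 ^ 2 * d₂ k := by
    simp only [smul_eq_C_mul, map_ofNat, d₂]
    ring
  rw [this]
  have h_x₂ := X_zero_mul_X_two_mem h_x₁ h_d₁
  have h_x₃ := X_zero_sq_mul_X_three_mem h_x₁ h_d₁ h_tr₁
  exact sub_mem (sub_mem (mul_mem (ofNat_mem S 2) (mul_mem h_x₁ h_x₃)) (pow_mem h_x₂ 2))
    (mul_mem (pow_mem h_x₀ 2) h_d₂)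

theorem exists_X_zero_pow_mul_mem (h_le : generated k ≤ S) (h_x₁ : X 1 ∈ S)
    (f : MvPolynomial (Fin (4 + 1)) k) : ∃ n : ℕ, X 0 ^ n * f ∈ S := by
  obtain ⟨h_x₀, h_d₁, h_d₂, h_tr₁, -⟩ := generators_mem_generated (k := k)
  refine exists_pow_mul_mem_of_mem_adjoin (h_le h_x₀) (G := Set.range X) ?_
    (adjoin_range_X (R := k) ▸ Algebra.mem_top)
  rintro _ ⟨i, rfl⟩
  fin_cases i
  · exact ⟨0, by simpa using h_le h_x₀⟩
  · exact ⟨0, by simpa using h_x₁⟩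
  · exact ⟨1, by simpa using X_zero_mul_X_two_mem h_x₁ (h_le h_d₁)⟩
  · exact ⟨2, X_zero_sq_mul_X_three_mem h_x₁ (h_le h_d₁) (h_le h_tr₁)⟩
  · exact ⟨3, X_zero_pow_three_mul_X_four_mem (h_le h_x₀) h_x₁ (h_le h_d₁) (h_le h_d₂)
      (h_le h_tr₁)⟩

end Slice

theorem apply_X_zero (n : ℕ) : weitz k n (X 0) = 0 := by simp [weitz, mkDerivation_X]

theorem apply_X_succ {n : ℕ} (i : Fin n) : weitz k n (X i.succ) = X i.castSucc := by
  simp only [weitz, mkDerivation_X, Fin.val_succ, Nat.add_one_ne_zero, dite_false]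
  rfl

theorem eq_zero_of_mem_generated {f : MvPolynomial (Fin (4 + 1)) k} (hf : f ∈ generated k) :
    weitz k 4 f = 0 := by
  have h_x₁ : weitz k 4 (X 1) = X 0 := apply_X_succ 0
  have h_x₂ : weitz k 4 (X 2) = X 1 := apply_X_succ 1
  have h_x₃ : weitz k 4 (X 3) = X 2 := apply_X_succ 2
  have h_x₄ : weitz k 4 (X 4) = X 3 := apply_X_succ 3
  have h_ofNat (n : ℕ) [n.AtLeastTwo] :
      weitz k 4 (ofNat(n) : MvPolynomial (Fin (4 + 1)) k) = 0 := (weitz k 4).map_natCast n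
  refine Derivation.eqOn_adjoin (D2 := 0) (fun g hg => ?_) hf
  rcases hg with rfl | rfl | rfl | rfl | rfl <;>
    simp only [d₁, d₂, tr₁, tr₂, map_add, map_sub, map_neg, Derivation.leibniz,
      Derivation.leibniz_pow, apply_X_zero, h_x₁, h_x₂, h_x₃, h_x₄, h_ofNat, smul_eq_mul,
      nsmul_eq_mul, Derivation.zero_apply] <;>
    push_cast <;> ring

end weitz

/-- For `n = 4`, the kernel of the Weitzenböck derivation on
`k[x_0,…,x_4]` is generated by `t`, `d_1`, `d_2`, `tr_1`, `tr_2`. -/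
theorem kernel_n4 (k : Type*) [Field k] [CharZero k] :
    ∀ f : MvPolynomial (Fin (4 + 1)) k,
      weitz k 4 f = 0 ↔ f ∈ Algebra.adjoin k
        ({X 0,
          X 1 ^ 2 - 2 * X 0 * X 2,
          -2 * X 0 * X 4 + 2 * X 1 * X 3 - X 2 ^ 2,
          X 1 ^ 3 - 3 * X 0 * X 1 * X 2 + 3 * X 0 ^ 2 * X 3,
          12 * X 0 * X 2 * X 4 - 9 * X 0 * X 3 ^ 2 - 6 * X 1 ^ 2 * X 4
            + 6 * X 1 * X 2 * X 3 - 2 * X 2 ^ 3} :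
          Set (MvPolynomial (Fin (4 + 1)) k)) := by
  intro f
  have h_slice : weitz k 4 (X 1) = X 0 := weitz.apply_X_succ 0
  refine derivation_eq_zero_iff_mem_of_slice (weitz k 4) (A := weitz.generated k)
    (fun _ => weitz.eq_zero_of_mem_generated) (s := X 1) ?_ ?_ ?_ ?_ <;> rw [h_slice]
  · exact X_ne_zero 0
  · exact weitz.generators_mem_generated.1
  · exact weitz.exists_X_zero_pow_mul_mem
      (fun _ hg => Algebra.subset_adjoin (Or.inl hg)) (Algebra.subset_adjoin (Or.inr rfl))
  · exact fun _ => weitz.mem_generated_of_X_zero_mul_mem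
end
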